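/- arXiv:2101.09082 — 2 statements merged into one kernel-verified Lean document; each statement's English description precedes it below -/
import Mathlib

section
/- Let Y = ΦX + E, where Φ ∈ ℂ^{M×N} has ΦΦ* invertible, X ∈ ℂ^{N×L} is s row-sparse, and E ∈ ℂ^{M×L}. Let W̃ ∈ ℂ^{N×L} be s̃ row-sparse, set X̃ = W̃ + Φ*(ΦΦ*)⁻¹(Y − ΦW̃), and suppose X̃ = QR with Q ∈ ℂ^{N×L} having orthonormal columns and R ∈ ℂ^{L×L} invertible with σ_max(R) ≤ α·σ_min(R), α ≥ 1. Let T ⊆ {1,…,N} with |T| = t ≥ s satisfy ‖Q_{i·}‖₂ ≥ ‖Q_{j·}‖₂ for all i ∈ T, j ∉ T, suppose Φ_T*Φ_T is invertible, and let W̄ be the feedback: W̄_(T^c) = 0, W̄_{(T)} = X̃_{(T)} + (Φ_T*Φ_T)⁻¹Φ_T*Φ_{T^c}X̃_{(T^c)}. Let δ < 1 be a restricted isometry constant of order s + s̃ + t for Φ, γ a preconditioned restricted isometry constant of order s + s̃ + t for Φ, and θ an upper restricted isometry constant of order s + t for (ΦΦ*)⁻¹Φ. Then ‖X − W̄‖_F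 ≤ √(2α²γ²/(1 − δ²)) · ‖X − W̃‖_F + (√(1+δ)/(1−δ) + √(2α²(1+θ))/√(1−δ²)) · ‖E‖_F. -/
open Matrix BigOperators

/-- Frobenius norm of a complex matrix. -/
noncomputable def frobNorm {m n : Type*} [Fintype m] [Fintype n] (A : Matrix m n ℂ) : ℝ :=
  Real.sqrt (∑ i, ∑ j, ‖A i j‖ ^ 2)

open scoped Classical in
/-- The row support of a matrix: indices of its nonzero rows. -/
noncomputable def rowSupp {N L : ℕ} (X : Matrix (Fin N) (Fin L) ℂ) : Finset (Fin N) :=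
  Finset.univ.filter (fun i => X i ≠ 0)

/-- `X_(T)`: the matrix obtained from `X` by zeroing every row with index outside `T`. -/
def rowRestrict {N L : ℕ} (T : Finset (Fin N)) (X : Matrix (Fin N) (Fin L) ℂ) :
    Matrix (Fin N) (Fin L) ℂ :=
  fun i j => if i ∈ T then X i j else 0

/-- Euclidean norm of a complex vector. -/
noncomputable def vecNorm {ι : Type*} [Fintype ι] (v : ι → ℂ) : ℝ :=
  Real.sqrt (∑ i, ‖v i‖ ^ 2)

/-- `Φ_T`: the submatrix of columns of `Φ` indexed by `T`. -/
def colSub {M N : ℕ} (Φ : Matrix (Fin M) (Fin N) ℂ) (T : Finset (Fin N)) :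
    Matrix (Fin M) {x // x ∈ T} ℂ :=
  fun i j => Φ i j.val

/-- `X_{(T)}`: the submatrix of rows of `X` indexed by `T`. -/
def rowSub {N L : ℕ} (T : Finset (Fin N)) (X : Matrix (Fin N) (Fin L) ℂ) :
    Matrix {x // x ∈ T} (Fin L) ℂ :=
  fun i j => X i.val j

/-- The set of values `‖R v‖` over unit vectors `v` (the "singular value range"). -/
noncomputable def sigmaSet {L : ℕ} (R : Matrix (Fin L) (Fin L) ℂ) : Set ℝ :=
  {c | ∃ v : Fin L → ℂ, vecNorm v = 1 ∧ c = vecNorm (R.mulVec v)}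

/-- The largest singular value of `R`. -/
noncomputable def sigmaMax {L : ℕ} (R : Matrix (Fin L) (Fin L) ℂ) : ℝ :=
  sSup (sigmaSet R)

/-- The smallest singular value of `R` (for invertible `R`). -/
noncomputable def sigmaMin {L : ℕ} (R : Matrix (Fin L) (Fin L) ℂ) : ℝ :=
  sInf (sigmaSet R)

/-- Spectral (operator) norm of a square complex matrix. -/
noncomputable def specNorm {ι : Type*} [Fintype ι] (A : Matrix ι ι ℂ) : ℝ :=
  sSup {c | ∃ v : ι → ℂ, vecNorm v = 1 ∧ c = vecNorm (A.mulVec v)}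

/-- `δ` is a restricted isometry constant (RIC) of order `t` for `A`, relative to matrices with
`L` columns: `(1-δ)‖Z‖_F² ≤ ‖AZ‖_F² ≤ (1+δ)‖Z‖_F²` for every `t` row-sparse `Z`. -/
def IsRIC {M N : ℕ} (L : ℕ) (A : Matrix (Fin M) (Fin N) ℂ) (t : ℕ) (δ : ℝ) : Prop :=
  ∀ Z : Matrix (Fin N) (Fin L) ℂ, (rowSupp Z).card ≤ t →
    (1 - δ) * frobNorm Z ^ 2 ≤ frobNorm (A * Z) ^ 2 ∧
      frobNorm (A * Z) ^ 2 ≤ (1 + δ) * frobNorm Z ^ 2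

/-- `γ` is a preconditioned restricted isometry constant (P-RIC) of order `t` for `Φ`:
`(1-γ)‖Z‖_F² ≤ Re tr((ΦZ)* (ΦΦ*)⁻¹ (ΦZ))` for every `t` row-sparse `Z`. -/
def IsPRIC {M N : ℕ} (L : ℕ) (Φ : Matrix (Fin M) (Fin N) ℂ) (t : ℕ) (γ : ℝ) : Prop :=
  ∀ Z : Matrix (Fin N) (Fin L) ℂ, (rowSupp Z).card ≤ t →
    (1 - γ) * frobNorm Z ^ 2 ≤ (Matrix.trace ((Φ * Z)ᴴ * ((Φ * Φᴴ)⁻¹ * (Φ * Z)))).re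

/-- `θ` is an upper restricted isometry constant of order `t` for `A`:
`‖AZ‖_F² ≤ (1+θ)‖Z‖_F²` for every `t` row-sparse `Z`. -/
def IsUpperRIC {M N : ℕ} (L : ℕ) (A : Matrix (Fin M) (Fin N) ℂ) (t : ℕ) (θ : ℝ) : Prop :=
  ∀ Z : Matrix (Fin N) (Fin L) ℂ, (rowSupp Z).card ≤ t →
    frobNorm (A * Z) ^ 2 ≤ (1 + θ) * frobNorm Z ^ 2

/-- The least-squares feedback of `X` on the index set `T`:
rows outside `T` are zero and on `T` it equals
`X_{(T)} + (Φ_T* Φ_T)⁻¹ Φ_T* Φ_{T^c} X_{(T^c)}`. -/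
noncomputable def feedback {M N L : ℕ} (Φ : Matrix (Fin M) (Fin N) ℂ) (T : Finset (Fin N))
    (X : Matrix (Fin N) (Fin L) ℂ) : Matrix (Fin N) (Fin L) ℂ :=
  fun i j =>
    if h : i ∈ T then
      (rowSub T X +
        ((colSub Φ T)ᴴ * colSub Φ T)⁻¹ * (colSub Φ T)ᴴ *
          (colSub Φ Tᶜ * rowSub Tᶜ X)) ⟨i, h⟩ j
    else 0

/-- Real Frobenius inner product. -/
noncomputable def ipF {m n : Type*} [Fintype m] [Fintype n] (A B : Matrix m n ℂ) : ℝ :=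
  (Matrix.trace (Aᴴ * B)).re

section ip
variable {m n k : Type*} [Fintype m] [Fintype n] [Fintype k]

lemma ipF_eq_sum (A B : Matrix m n ℂ) :
    ipF A B = ∑ i, ∑ j, (star (A i j) * B i j).re := by
  unfold ipF
  rw [Finset.sum_comm]
  simp [Matrix.trace, Matrix.mul_apply, Matrix.conjTranspose_apply]

lemma frobNorm_nonneg (A : Matrix m n ℂ) : 0 ≤ frobNorm A := Real.sqrt_nonneg _

lemma frobNorm_sq (A : Matrix m n ℂ) : frobNorm A ^ 2 = ∑ i, ∑ j, ‖A i j‖ ^ 2 := by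
  unfold frobNorm
  rw [Real.sq_sqrt]
  positivity

lemma ipF_self (A : Matrix m n ℂ) : ipF A A = frobNorm A ^ 2 := by
  rw [frobNorm_sq, ipF_eq_sum]
  refine Finset.sum_congr rfl fun i _ => Finset.sum_congr rfl fun j _ => ?_
  rw [← Complex.normSq_eq_norm_sq, Complex.normSq_apply]
  simp

lemma ipF_comm (A B : Matrix m n ℂ) : ipF A B = ipF B A := by
  rw [ipF_eq_sum, ipF_eq_sum]
  refine Finset.sum_congr rfl fun i _ => Finset.sum_congr rfl fun j _ => ?_
  simp [mul_comm]

lemma ipF_add_right (A B C : Matrix m n ℂ) : ipF A (B + C) = ipF A B + ipF A C := by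
  simp [ipF, Matrix.mul_add]

lemma ipF_sub_right (A B C : Matrix m n ℂ) : ipF A (B - C) = ipF A B - ipF A C := by
  simp [ipF, Matrix.mul_sub]

lemma ipF_smul_right (A B : Matrix m n ℂ) (c : ℝ) : ipF A ((c : ℂ) • B) = c * ipF A B := by
  simp [ipF]

lemma ipF_add_left (A B C : Matrix m n ℂ) : ipF (A + B) C = ipF A C + ipF B C := by
  rw [ipF_comm, ipF_add_right, ipF_comm C A, ipF_comm C B]

lemma ipF_sub_left (A B C : Matrix m n ℂ) : ipF (A - B) C = ipF A C - ipF B C := by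
  rw [ipF_comm, ipF_sub_right, ipF_comm C A, ipF_comm C B]

lemma ipF_smul_left (A B : Matrix m n ℂ) (c : ℝ) : ipF ((c : ℂ) • A) B = c * ipF A B := by
  rw [ipF_comm, ipF_smul_right, ipF_comm]

lemma ipF_mul_left (C : Matrix m k ℂ) (A : Matrix k n ℂ) (B : Matrix m n ℂ) :
    ipF (C * A) B = ipF A (Cᴴ * B) := by
  simp [ipF, Matrix.conjTranspose_mul, Matrix.mul_assoc]

lemma frobNorm_eq_zero {A : Matrix m n ℂ} (h : frobNorm A = 0) : A = 0 := by
  have h2 := frobNorm_sq A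
  rw [h] at h2
  ext i j
  have h3 : ∑ i, ∑ j, ‖A i j‖ ^ 2 = 0 := by rw [← h2]; norm_num
  rw [Finset.sum_eq_zero_iff_of_nonneg (fun i _ => by positivity)] at h3
  have h4 := h3 i (Finset.mem_univ _)
  rw [Finset.sum_eq_zero_iff_of_nonneg (fun i _ => by positivity)] at h4
  simpa using h4 j (Finset.mem_univ _)

/-- If a bilinear quantity is bounded on the scaled pair, it is bounded. -/
lemma ipF_le (A B : Matrix m n ℂ) : ipF A B ≤ frobNorm A * frobNorm B := by
  by_cases hA : frobNorm A = 0
  · rw [frobNorm_eq_zero hA]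
    have : frobNorm (0 : Matrix m n ℂ) = 0 := by simp [frobNorm]
    simp [this, ipF]
  by_cases hB : frobNorm B = 0
  · rw [frobNorm_eq_zero hB]
    have : frobNorm (0 : Matrix m n ℂ) = 0 := by simp [frobNorm]
    simp [this, ipF]
  have hA' := lt_of_le_of_ne (frobNorm_nonneg A) (Ne.symm hA)
  have hB' := lt_of_le_of_ne (frobNorm_nonneg B) (Ne.symm hB)
  have h := ipF_self (((frobNorm B : ℝ) : ℂ) • A - ((frobNorm A : ℝ) : ℂ) • B)
  simp only [ipF_sub_left, ipF_sub_right, ipF_smul_left, ipF_smul_right] at h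
  rw [ipF_self, ipF_self, ipF_comm B A] at h
  have h0 := sq_nonneg (frobNorm (((frobNorm B : ℝ) : ℂ) • A - ((frobNorm A : ℝ) : ℂ) • B))
  rw [← h] at h0
  have hp := mul_pos hA' hB'
  by_contra hc
  push Not at hc
  have := mul_lt_mul_of_pos_left hc hp
  nlinarith

lemma frobNorm_add_sq (A B : Matrix m n ℂ) :
    frobNorm (A + B) ^ 2 = frobNorm A ^ 2 + 2 * ipF A B + frobNorm B ^ 2 := by
  rw [← ipF_self, ← ipF_self, ← ipF_self, ipF_add_left, ipF_add_right, ipF_add_right, ipF_comm B A]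
  ring

lemma frobNorm_sub_sq (A B : Matrix m n ℂ) :
    frobNorm (A - B) ^ 2 = frobNorm A ^ 2 - 2 * ipF A B + frobNorm B ^ 2 := by
  rw [← ipF_self, ← ipF_self, ← ipF_self, ipF_sub_left, ipF_sub_right, ipF_sub_right, ipF_comm B A]
  ring

lemma frobNorm_smul (A : Matrix m n ℂ) {c : ℝ} (hc : 0 ≤ c) :
    frobNorm ((c : ℂ) • A) = c * frobNorm A := by
  have : frobNorm ((c : ℂ) • A) ^ 2 = (c * frobNorm A) ^ 2 := by
    rw [← ipF_self, ipF_smul_left, ipF_smul_right, ipF_self]; ring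
  exact (sq_eq_sq₀ (frobNorm_nonneg _) (mul_nonneg hc (frobNorm_nonneg _))).1 this

lemma frobNorm_add_le (A B : Matrix m n ℂ) : frobNorm (A + B) ≤ frobNorm A + frobNorm B := by
  refine le_of_sq_le_sq ?_ (add_nonneg (frobNorm_nonneg _) (frobNorm_nonneg _))
  rw [frobNorm_add_sq]
  nlinarith [ipF_le A B]

lemma frobNorm_neg (A : Matrix m n ℂ) : frobNorm (-A) = frobNorm A := by
  simp [frobNorm]

open scoped Matrix.Norms.Frobenius in
lemma frobNorm_eq_norm (A : Matrix m n ℂ) : frobNorm A = ‖A‖ := by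
  rw [Matrix.frobenius_norm_def, frobNorm, Real.sqrt_eq_rpow]
  norm_cast

lemma frobNorm_mul_le (C : Matrix m k ℂ) (A : Matrix k n ℂ) :
    frobNorm (C * A) ≤ frobNorm C * frobNorm A := by
  rw [frobNorm_eq_norm, frobNorm_eq_norm, frobNorm_eq_norm]
  exact Matrix.frobenius_norm_mul C A

lemma vecNorm_nonneg (v : m → ℂ) : 0 ≤ vecNorm v := Real.sqrt_nonneg _

lemma vecNorm_eq_col (v : m → ℂ) : vecNorm v = frobNorm (Matrix.replicateCol Unit v) := by
  simp [vecNorm, frobNorm]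

lemma frobNorm_sq_rows (A : Matrix m n ℂ) : frobNorm A ^ 2 = ∑ i, vecNorm (A i) ^ 2 := by
  rw [frobNorm_sq]
  refine Finset.sum_congr rfl fun i _ => ?_
  unfold vecNorm
  rw [Real.sq_sqrt]
  positivity
end ip


section sigma
variable {L : ℕ}

lemma vecNorm_mulVec (R : Matrix (Fin L) (Fin L) ℂ) (v : Fin L → ℂ) :
    vecNorm (R.mulVec v) = frobNorm (R * Matrix.replicateCol Unit v) := by
  rw [vecNorm_eq_col, Matrix.replicateCol_mulVec]

lemma vecNorm_smul (v : Fin L → ℂ) {c : ℝ} (hc : 0 ≤ c) :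
    vecNorm ((c : ℂ) • v) = c * vecNorm v := by
  rw [vecNorm_eq_col, vecNorm_eq_col, Matrix.replicateCol_smul, frobNorm_smul _ hc]

lemma vecNorm_eq_zero {v : Fin L → ℂ} (h : vecNorm v = 0) : v = 0 := by
  rw [vecNorm_eq_col] at h
  have := frobNorm_eq_zero h
  ext i
  exact congrFun (congrFun this i) ()

lemma sigmaSet_bddAbove (R : Matrix (Fin L) (Fin L) ℂ) : BddAbove (sigmaSet R) := by
  refine ⟨frobNorm R, ?_⟩
  rintro c ⟨v, hv, rfl⟩
  rw [vecNorm_mulVec]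
  refine (frobNorm_mul_le _ _).trans ?_
  rw [← vecNorm_eq_col, hv, mul_one]

lemma sigmaSet_bddBelow (R : Matrix (Fin L) (Fin L) ℂ) : BddBelow (sigmaSet R) := by
  refine ⟨0, ?_⟩
  rintro c ⟨v, hv, rfl⟩
  exact vecNorm_nonneg _

lemma sigma_bounds (R : Matrix (Fin L) (Fin L) ℂ) (v : Fin L → ℂ) :
    vecNorm (R.mulVec v) ≤ sigmaMax R * vecNorm v ∧
      sigmaMin R * vecNorm v ≤ vecNorm (R.mulVec v) := by
  by_cases h : vecNorm v = 0
  · have h0 := vecNorm_eq_zero h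
    subst h0
    rw [Matrix.mulVec_zero, h]
    simp
  have hp := lt_of_le_of_ne (vecNorm_nonneg v) (Ne.symm h)
  have hi : 0 ≤ (vecNorm v)⁻¹ := inv_nonneg.2 hp.le
  have hmem : (vecNorm v)⁻¹ * vecNorm (R.mulVec v) ∈ sigmaSet R := by
    refine ⟨(((vecNorm v)⁻¹ : ℝ) : ℂ) • v, ?_, ?_⟩
    · rw [vecNorm_smul _ hi, inv_mul_cancel₀ h]
    · rw [Matrix.mulVec_smul, vecNorm_smul _ hi]
  have h1 : _ ≤ sigmaMax R := le_csSup (sigmaSet_bddAbove R) hmem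
  have h2 : sigmaMin R ≤ _ := csInf_le (sigmaSet_bddBelow R) hmem
  rw [inv_mul_le_iff₀ hp] at h1
  rw [le_inv_mul_iff₀ hp] at h2
  constructor <;> linarith

lemma sigmaMin_nonneg (R : Matrix (Fin L) (Fin L) ℂ) : 0 ≤ sigmaMin R := by
  apply Real.sInf_nonneg
  rintro c ⟨v, hv, rfl⟩
  exact vecNorm_nonneg _

lemma sigmaMax_nonneg (R : Matrix (Fin L) (Fin L) ℂ) : 0 ≤ sigmaMax R := by
  apply Real.sSup_nonneg
  rintro c ⟨v, hv, rfl⟩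
  exact vecNorm_nonneg _

lemma frobNorm_conjTranspose {m n : Type*} [Fintype m] [Fintype n] (A : Matrix m n ℂ) :
    frobNorm Aᴴ = frobNorm A := by
  unfold frobNorm
  rw [Finset.sum_comm]
  simp

/-- column-matrix versions -/
lemma sigmaMax_col (R : Matrix (Fin L) (Fin L) ℂ) (C : Matrix (Fin L) Unit ℂ) :
    frobNorm (R * C) ≤ sigmaMax R * frobNorm C := by
  have := (sigma_bounds R (fun i => C i ())).1
  rw [vecNorm_mulVec, vecNorm_eq_col] at this
  exact this

lemma sigmaMin_col (R : Matrix (Fin L) (Fin L) ℂ) (C : Matrix (Fin L) Unit ℂ) :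
    sigmaMin R * frobNorm C ≤ frobNorm (R * C) := by
  have := (sigma_bounds R (fun i => C i ())).2
  rw [vecNorm_mulVec, vecNorm_eq_col] at this
  exact this

lemma sigmaMax_adj (R : Matrix (Fin L) (Fin L) ℂ) (C : Matrix (Fin L) Unit ℂ) :
    frobNorm (Rᴴ * C) ≤ sigmaMax R * frobNorm C := by
  have h1 : frobNorm (Rᴴ * C) ^ 2 = ipF C (R * (Rᴴ * C)) := by
    rw [← ipF_self, ipF_mul_left, Matrix.conjTranspose_conjTranspose]
  have h2 := ipF_le C (R * (Rᴴ * C))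
  have h3 := mul_le_mul_of_nonneg_left (sigmaMax_col R (Rᴴ * C)) (frobNorm_nonneg C)
  rcases (frobNorm_nonneg (Rᴴ * C)).eq_or_lt with h | h
  · rw [← h]
    exact mul_nonneg (sigmaMax_nonneg R) (frobNorm_nonneg C)
  · refine le_of_mul_le_mul_right ?_ h
    nlinarith

lemma sigmaMin_adj (R : Matrix (Fin L) (Fin L) ℂ) (hR : IsUnit R) (C : Matrix (Fin L) Unit ℂ) :
    sigmaMin R * frobNorm C ≤ frobNorm (Rᴴ * C) := by
  have hdet := (Matrix.isUnit_iff_isUnit_det R).1 hR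
  set w := R⁻¹ * C with hw
  have hRw : R * w = C := by rw [hw, ← Matrix.mul_assoc, Matrix.mul_nonsing_inv _ hdet, Matrix.one_mul]
  have h1 : frobNorm C ^ 2 = ipF w (Rᴴ * C) := by
    rw [← ipF_self]
    nth_rewrite 1 [← hRw]
    rw [ipF_mul_left]
  have h2 := ipF_le w (Rᴴ * C)
  have h3 := sigmaMin_col R w
  rw [hRw] at h3
  rcases (frobNorm_nonneg C).eq_or_lt with h | h
  · rw [← h, mul_zero]
    exact frobNorm_nonneg _
  · refine le_of_mul_le_mul_right ?_ h
    have h4 := mul_le_mul_of_nonneg_left (h1.le.trans h2) (sigmaMin_nonneg R)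
    have h5 := mul_le_mul_of_nonneg_right h3 (frobNorm_nonneg (Rᴴ * C))
    nlinarith

lemma vecNorm_row {N : ℕ} (Q : Matrix (Fin N) (Fin L) ℂ) (R : Matrix (Fin L) (Fin L) ℂ) (i : Fin N) :
    vecNorm ((Q * R) i) = frobNorm (Rᴴ * (Matrix.replicateRow Unit (Q i))ᴴ) ∧
    vecNorm (Q i) = frobNorm ((Matrix.replicateRow Unit (Q i))ᴴ) := by
  rw [← Matrix.conjTranspose_mul, frobNorm_conjTranspose, frobNorm_conjTranspose]
  simp [frobNorm, vecNorm, Matrix.mul_apply]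

lemma row_bounds {N : ℕ} (Q : Matrix (Fin N) (Fin L) ℂ) (R : Matrix (Fin L) (Fin L) ℂ)
    (hR : IsUnit R) (i : Fin N) :
    vecNorm ((Q * R) i) ≤ sigmaMax R * vecNorm (Q i) ∧
      sigmaMin R * vecNorm (Q i) ≤ vecNorm ((Q * R) i) := by
  rw [(vecNorm_row Q R i).1, (vecNorm_row Q R i).2]
  exact ⟨sigmaMax_adj _ _, sigmaMin_adj _ hR _⟩
end sigma

section restrict
variable {M N L : ℕ}

lemma frobNorm_rowRestrict_sq (T : Finset (Fin N)) (A : Matrix (Fin N) (Fin L) ℂ) :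
    frobNorm (rowRestrict T A) ^ 2 = ∑ i ∈ T, vecNorm (A i) ^ 2 := by
  rw [frobNorm_sq, ← Finset.sum_subset (Finset.subset_univ T)]
  · refine Finset.sum_congr rfl fun i hi => ?_
    unfold vecNorm
    rw [Real.sq_sqrt (by positivity)]
    simp [rowRestrict, hi]
  · intro i _ hi
    simp [rowRestrict, hi]

lemma ipF_rowRestrict (T : Finset (Fin N)) (A B : Matrix (Fin N) (Fin L) ℂ) :
    ipF A (rowRestrict T B) = ipF (rowRestrict T A) (rowRestrict T B) := by
  rw [ipF_eq_sum, ipF_eq_sum]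
  refine Finset.sum_congr rfl fun i _ => Finset.sum_congr rfl fun j _ => ?_
  unfold rowRestrict
  split_ifs <;> simp

lemma rowRestrict_add (T : Finset (Fin N)) (A B : Matrix (Fin N) (Fin L) ℂ) :
    rowRestrict T (A + B) = rowRestrict T A + rowRestrict T B := by
  ext i j
  simp only [rowRestrict, Matrix.add_apply]
  split_ifs <;> simp

lemma frobNorm_rowRestrict_mono {S T : Finset (Fin N)} (h : S ⊆ T) (A : Matrix (Fin N) (Fin L) ℂ) :
    frobNorm (rowRestrict S A) ≤ frobNorm (rowRestrict T A) := by
  refine le_of_sq_le_sq ?_ (frobNorm_nonneg _)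
  rw [frobNorm_rowRestrict_sq, frobNorm_rowRestrict_sq]
  exact Finset.sum_le_sum_of_subset_of_nonneg h (fun _ _ _ => sq_nonneg _)

lemma frobNorm_split (T : Finset (Fin N)) (A : Matrix (Fin N) (Fin L) ℂ) :
    frobNorm A ^ 2 = frobNorm (rowRestrict T A) ^ 2 + frobNorm (rowRestrict Tᶜ A) ^ 2 := by
  rw [frobNorm_rowRestrict_sq, frobNorm_rowRestrict_sq, Finset.sum_add_sum_compl, frobNorm_sq_rows]

lemma rowSupp_subset {X : Matrix (Fin N) (Fin L) ℂ} {U : Finset (Fin N)}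
    (h : ∀ i ∉ U, X i = 0) : rowSupp X ⊆ U := by
  intro i hi
  by_contra hc
  simp [rowSupp] at hi
  exact hi (h i hc)

lemma eq_zero_of_notMem {X : Matrix (Fin N) (Fin L) ℂ} {i : Fin N} (h : i ∉ rowSupp X) :
    X i = 0 := by
  simpa [rowSupp] using h

lemma mul_rowRestrict (Φ : Matrix (Fin M) (Fin N) ℂ) (T : Finset (Fin N))
    (A : Matrix (Fin N) (Fin L) ℂ) : Φ * rowRestrict T A = colSub Φ T * rowSub T A := by
  ext i j
  rw [Matrix.mul_apply, Matrix.mul_apply, Finset.univ_eq_attach]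
  simp only [colSub, rowSub]
  rw [Finset.sum_attach T (fun k => Φ i k * A k j), ← Finset.sum_subset (Finset.subset_univ T)]
  · exact Finset.sum_congr rfl fun k hk => by simp [rowRestrict, hk]
  · intro k _ hk
    simp [rowRestrict, hk]

lemma rowRestrict_add_compl (T : Finset (Fin N)) (A : Matrix (Fin N) (Fin L) ℂ) :
    rowRestrict T A + rowRestrict Tᶜ A = A := by
  ext i j
  simp only [rowRestrict, Matrix.add_apply, Finset.mem_compl]
  split_ifs <;> simp_all

lemma feedback_restrict (Φ : Matrix (Fin M) (Fin N) ℂ) (T : Finset (Fin N))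
    (A : Matrix (Fin N) (Fin L) ℂ) : rowRestrict T (feedback Φ T A) = feedback Φ T A := by
  ext i j
  simp only [rowRestrict, feedback]
  split_ifs <;> rfl

lemma feedback_normal (Φ : Matrix (Fin M) (Fin N) ℂ) (T : Finset (Fin N))
    (hTinv : IsUnit ((colSub Φ T)ᴴ * colSub Φ T))
    (A : Matrix (Fin N) (Fin L) ℂ) :
    (colSub Φ T)ᴴ * (Φ * A - Φ * feedback Φ T A) = 0 := by
  have hdet := (Matrix.isUnit_iff_isUnit_det _).1 hTinv
  have h1 : rowSub T (feedback Φ T A) = rowSub T A +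
        ((colSub Φ T)ᴴ * colSub Φ T)⁻¹ * (colSub Φ T)ᴴ * (colSub Φ Tᶜ * rowSub Tᶜ A) := by
    ext i j
    obtain ⟨i, hi⟩ := i
    simp only [rowSub, feedback]
    rw [dif_pos hi]
  rw [← feedback_restrict, mul_rowRestrict, h1]
  nth_rewrite 1 [← rowRestrict_add_compl T A]
  rw [Matrix.mul_add, mul_rowRestrict, mul_rowRestrict]
  set B := colSub Φ T
  set C := colSub Φ Tᶜ * rowSub Tᶜ A
  set x := rowSub T A
  have : Bᴴ * (B * ((Bᴴ * B)⁻¹ * Bᴴ * C)) = Bᴴ * C := by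
    rw [← Matrix.mul_assoc, Matrix.mul_assoc _ _ C, ← Matrix.mul_assoc (Bᴴ * B),
      Matrix.mul_nonsing_inv _ hdet, Matrix.one_mul]
  rw [Matrix.mul_sub, Matrix.mul_add, Matrix.mul_add, Matrix.mul_add, this, sub_self]

lemma top_rows {S T : Finset (Fin N)} (hc : S.card ≤ T.card) (f : Fin N → ℝ)
    (hf : ∀ i, 0 ≤ f i) (h : ∀ i ∈ T, ∀ j ∉ T, f j ≤ f i) :
    ∑ i ∈ S \ T, f i ^ 2 ≤ ∑ i ∈ T \ S, f i ^ 2 := by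
  have hc' := Finset.card_sdiff_le_card_sdiff_iff.2 hc
  rcases (S \ T).eq_empty_or_nonempty with he | hne
  · rw [he, Finset.sum_empty]
    exact Finset.sum_nonneg fun _ _ => sq_nonneg _
  obtain ⟨m, hm, hmax⟩ := Finset.exists_max_image (S \ T) (fun i => f i ^ 2) hne
  have h1 := Finset.sum_le_card_nsmul (S \ T) (fun i => f i ^ 2) (f m ^ 2) hmax
  have h2 := Finset.card_nsmul_le_sum (T \ S) (fun i => f i ^ 2) (f m ^ 2) (by
    intro i hi
    exact pow_le_pow_left₀ (hf m) (h i (Finset.mem_sdiff.1 hi).1 m (Finset.mem_sdiff.1 hm).2) 2)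
  refine h1.trans (le_trans ?_ h2)
  exact nsmul_le_nsmul_left (sq_nonneg _) hc'

end restrict

section main
variable {M N L : ℕ}

lemma ric_bilin (Φ : Matrix (Fin M) (Fin N) ℂ) {k : ℕ} {δ : ℝ} (h : IsRIC L Φ k δ)
    (U : Finset (Fin N)) (hU : U.card ≤ k) (Z V : Matrix (Fin N) (Fin L) ℂ)
    (hZ : ∀ i ∉ U, Z i = 0) (hV : ∀ i ∉ U, V i = 0) :
    ipF Z V - ipF (Φ * Z) (Φ * V) ≤ δ * frobNorm Z * frobNorm V := by
  have h0 : frobNorm (0 : Matrix (Fin N) (Fin L) ℂ) = 0 := by simp [frobNorm]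
  by_cases hA : frobNorm Z = 0
  · rw [frobNorm_eq_zero hA, h0]
    simp [ipF]
  by_cases hB : frobNorm V = 0
  · rw [frobNorm_eq_zero hB, h0]
    simp [ipF]
  have hA' := lt_of_le_of_ne (frobNorm_nonneg Z) (Ne.symm hA)
  have hB' := lt_of_le_of_ne (frobNorm_nonneg V) (Ne.symm hB)
  set a := frobNorm V with ha
  set b := frobNorm Z with hb
  have h1 := h ((a : ℂ) • Z + (b : ℂ) • V) ((Finset.card_le_card (rowSupp_subset (U := U) (by
    intro i hi
    change (a : ℂ) • Z i + (b : ℂ) • V i = 0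
    rw [hZ i hi, hV i hi]; simp))).trans hU)
  have h2 := h ((a : ℂ) • Z - (b : ℂ) • V) ((Finset.card_le_card (rowSupp_subset (U := U) (by
    intro i hi
    change (a : ℂ) • Z i - (b : ℂ) • V i = 0
    rw [hZ i hi, hV i hi]; simp))).trans hU)
  have h1' := h1.1
  have h2' := h2.2
  rw [Matrix.mul_add, Matrix.mul_smul, Matrix.mul_smul, frobNorm_add_sq, frobNorm_add_sq,
    frobNorm_smul _ hA'.le, frobNorm_smul _ hA'.le, frobNorm_smul _ hB'.le,
    frobNorm_smul _ hB'.le, ipF_smul_left, ipF_smul_left, ipF_smul_right, ipF_smul_right] at h1'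
  rw [Matrix.mul_sub, Matrix.mul_smul, Matrix.mul_smul, frobNorm_sub_sq, frobNorm_sub_sq,
    frobNorm_smul _ hA'.le, frobNorm_smul _ hA'.le, frobNorm_smul _ hB'.le,
    frobNorm_smul _ hB'.le, ipF_smul_left, ipF_smul_left, ipF_smul_right, ipF_smul_right] at h2'
  rw [← ha, ← hb] at h1' h2'
  have hp := mul_pos hA' hB'
  refine le_of_mul_le_mul_left ?_ hp
  nlinarith

lemma htp_real {δ a b c : ℝ} (h0 : 0 ≤ δ) (h1 : δ < 1) (hb : 0 ≤ b) (hc : 0 ≤ c)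
    (h : a ^ 2 ≤ (δ * a + c) ^ 2 + b ^ 2) :
    a ≤ c / (1 - δ) + b / Real.sqrt (1 - δ ^ 2) := by
  have hd : 0 < 1 - δ := by linarith
  have hq : 0 < 1 - δ ^ 2 := by nlinarith
  set q := Real.sqrt (1 - δ ^ 2) with hqd
  have hqp : 0 < q := Real.sqrt_pos.2 hq
  have hqs : q ^ 2 = 1 - δ ^ 2 := Real.sq_sqrt hq.le
  by_contra hcon
  push Not at hcon
  obtain ⟨w, hw⟩ : ∃ w, w = c / (1 - δ) := ⟨_, rfl⟩
  have hwc : c = w * (1 - δ) := by rw [hw]; field_simp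
  have hw0 : 0 ≤ w := by rw [hw]; positivity
  rw [← hw] at hcon
  obtain ⟨y, hy⟩ : ∃ y, y = a - w := ⟨_, rfl⟩
  have hay : a = w + y := by linarith
  have hyb : b / q < y := by linarith
  have hby : b < y * q := (div_lt_iff₀ hqp).1 hyb
  have hy0 : 0 ≤ y := by
    have : 0 ≤ b / q := by positivity
    linarith
  have h3 : b ^ 2 < (1 - δ ^ 2) * y ^ 2 := by
    rw [← hqs]; nlinarith
  rw [hay, hwc] at h
  have h4 : 0 ≤ w * y * (1 - δ) := by positivity
  nlinarith

lemma htp (Φ : Matrix (Fin M) (Fin N) ℂ) {k : ℕ} {δ : ℝ} (h : IsRIC L Φ k δ)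
    (hδ0 : 0 ≤ δ) (hδ1 : δ < 1) (S T : Finset (Fin N)) (hU : (S ∪ T).card ≤ k)
    (X A : Matrix (Fin N) (Fin L) ℂ) (E : Matrix (Fin M) (Fin L) ℂ)
    (hX : ∀ i ∉ S, X i = 0) (hA : Φ * A = Φ * X + E)
    (hTinv : IsUnit ((colSub Φ T)ᴴ * colSub Φ T)) :
    frobNorm (X - feedback Φ T A) ≤ Real.sqrt (1 + δ) * frobNorm E / (1 - δ) +
      frobNorm (rowRestrict Tᶜ X) / Real.sqrt (1 - δ ^ 2) := by
  set W := feedback Φ T A with hW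
  have hWT : ∀ i ∉ T, W i = 0 := by
    intro i hi
    ext j
    simp [hW, feedback, hi]
  set Z := X - W with hZ
  set V := rowRestrict T Z with hV
  have hZU : ∀ i ∉ S ∪ T, Z i = 0 := by
    intro i hi
    rw [Finset.mem_union, not_or] at hi
    change X i - W i = 0
    rw [hX i hi.1, hWT i hi.2, sub_zero]
  have hVU : ∀ i ∉ S ∪ T, V i = 0 := by
    intro i hi
    rw [Finset.mem_union, not_or] at hi
    ext j
    simp [hV, rowRestrict, hi.2]
  have hcompl : rowRestrict Tᶜ Z = rowRestrict Tᶜ X := by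
    ext i j
    simp only [rowRestrict, Finset.mem_compl]
    split_ifs with hi
    · rfl
    · change X i j - W i j = X i j
      rw [hWT i hi]; simp
  have hb := ric_bilin Φ h (S ∪ T) hU Z V hZU hVU
  have hZV : ipF Z V = frobNorm V ^ 2 := by rw [hV, ipF_rowRestrict, ipF_self]
  have hn : ipF (Φ * V) (Φ * A - Φ * W) = 0 := by
    rw [hV, mul_rowRestrict, ipF_mul_left, feedback_normal Φ T hTinv]
    simp [ipF]
  have hn2 : Φ * A - Φ * W = Φ * Z + E := by
    rw [hA, hZ, Matrix.mul_sub]; abel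
  rw [hn2, ipF_add_right, ipF_comm] at hn
  have hcard : (rowSupp V).card ≤ k := (Finset.card_le_card (rowSupp_subset hVU)).trans hU
  have hup := (h V hcard).2
  have hη : frobNorm (Φ * V) ≤ Real.sqrt (1 + δ) * frobNorm V := by
    refine le_of_sq_le_sq ?_ (mul_nonneg (Real.sqrt_nonneg _) (frobNorm_nonneg _))
    rw [mul_pow, Real.sq_sqrt (by linarith)]
    exact hup
  have hE := ipF_le (Φ * V) (-E)
  rw [frobNorm_neg, show ipF (Φ * V) (-E) = -ipF (Φ * V) E by simp [ipF]] at hE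
  have hE2 := mul_le_mul_of_nonneg_right hη (frobNorm_nonneg E)
  have hVle : frobNorm V ≤ δ * frobNorm Z + Real.sqrt (1 + δ) * frobNorm E := by
    rcases (frobNorm_nonneg V).eq_or_lt with h0 | h0
    · rw [← h0]
      have := frobNorm_nonneg Z
      have := frobNorm_nonneg E
      positivity
    · refine le_of_mul_le_mul_right ?_ h0
      nlinarith
  apply htp_real hδ0 hδ1 (frobNorm_nonneg _) (mul_nonneg (Real.sqrt_nonneg _) (frobNorm_nonneg _))
  rw [frobNorm_split T Z, hcompl]
  have := pow_le_pow_left₀ (frobNorm_nonneg V) hVle 2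
  linarith

lemma pric_step (Φ : Matrix (Fin M) (Fin N) ℂ) (hinv : IsUnit (Φ * Φᴴ)) {γ : ℝ} {k : ℕ}
    (h : IsPRIC L Φ k γ) (Z : Matrix (Fin N) (Fin L) ℂ) (hZ : (rowSupp Z).card ≤ k) :
    frobNorm (Z - Φᴴ * ((Φ * Φᴴ)⁻¹ * (Φ * Z))) ^ 2 ≤ γ * frobNorm Z ^ 2 := by
  have hdet := (Matrix.isUnit_iff_isUnit_det _).1 hinv
  have h1 := h Z hZ
  change _ ≤ ipF (Φ * Z) ((Φ * Φᴴ)⁻¹ * (Φ * Z)) at h1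
  set a := (Φ * Φᴴ)⁻¹ * (Φ * Z) with ha
  have haz : Φ * Φᴴ * a = Φ * Z := by
    rw [ha, ← Matrix.mul_assoc, Matrix.mul_nonsing_inv _ hdet, Matrix.one_mul]
  have h2 : frobNorm (Φᴴ * a) ^ 2 = ipF (Φ * Z) a := by
    rw [← ipF_self, ipF_mul_left, Matrix.conjTranspose_conjTranspose, ← Matrix.mul_assoc, haz,
      ipF_comm]
  have h3 : ipF Z (Φᴴ * a) = ipF (Φ * Z) a := by rw [ipF_mul_left]
  rw [frobNorm_sub_sq, h2, h3]
  linarith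

lemma pric_bound (Φ : Matrix (Fin M) (Fin N) ℂ) (hinv : IsUnit (Φ * Φᴴ)) {γ : ℝ} (hγ : 0 ≤ γ)
    {k : ℕ} (h : IsPRIC L Φ k γ) (Z : Matrix (Fin N) (Fin L) ℂ) (hZ : (rowSupp Z).card ≤ k)
    (U : Finset (Fin N)) (hU : U.card ≤ k) :
    frobNorm (rowRestrict U (Z - Φᴴ * ((Φ * Φᴴ)⁻¹ * (Φ * Z)))) ≤ γ * frobNorm Z := by
  have hdet := (Matrix.isUnit_iff_isUnit_det _).1 hinv
  set D := Z - Φᴴ * ((Φ * Φᴴ)⁻¹ * (Φ * Z)) with hD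
  set V := rowRestrict U D with hV
  have hVs : (rowSupp V).card ≤ k := by
    refine (Finset.card_le_card (rowSupp_subset ?_)).trans hU
    intro i hi
    ext j
    simp [hV, rowRestrict, hi]
  have hΦD : Φ * D = 0 := by
    rw [hD, Matrix.mul_sub, ← Matrix.mul_assoc Φ, ← Matrix.mul_assoc (Φ * Φᴴ),
      Matrix.mul_nonsing_inv _ hdet, Matrix.one_mul, sub_self]
  have h1 : frobNorm V ^ 2 = ipF D (V - Φᴴ * ((Φ * Φᴴ)⁻¹ * (Φ * V))) := by
    rw [ipF_sub_right, ← ipF_mul_left, hΦD]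
    rw [show ipF D V = frobNorm V ^ 2 by rw [hV, ipF_rowRestrict, ipF_self]]
    simp [ipF]
  have h2 := ipF_le D (V - Φᴴ * ((Φ * Φᴴ)⁻¹ * (Φ * V)))
  have h3 := pric_step Φ hinv h Z hZ
  have h4 := pric_step Φ hinv h V hVs
  rw [← hD] at h3
  set F := V - Φᴴ * ((Φ * Φᴴ)⁻¹ * (Φ * V))
  have h5 : frobNorm D * frobNorm F ≤ γ * frobNorm Z * frobNorm V := by
    have hz := frobNorm_nonneg Z
    have hv := frobNorm_nonneg V
    refine le_of_sq_le_sq ?_ (by positivity)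
    calc (frobNorm D * frobNorm F) ^ 2 = frobNorm D ^ 2 * frobNorm F ^ 2 := by ring
      _ ≤ (γ * frobNorm Z ^ 2) * (γ * frobNorm V ^ 2) :=
        mul_le_mul h3 h4 (sq_nonneg _) (by positivity)
      _ = _ := by ring
  rcases (frobNorm_nonneg V).eq_or_lt with h0 | h0
  · rw [← h0]
    exact mul_nonneg hγ (frobNorm_nonneg _)
  · refine le_of_mul_le_mul_right ?_ h0
    nlinarith

lemma uric_bound (Φ : Matrix (Fin M) (Fin N) ℂ) {θ : ℝ} (hθ : 0 ≤ θ)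
    {k : ℕ} (h : IsUpperRIC L ((Φ * Φᴴ)⁻¹ * Φ) k θ) (E : Matrix (Fin M) (Fin L) ℂ)
    (U : Finset (Fin N)) (hU : U.card ≤ k) :
    frobNorm (rowRestrict U (Φᴴ * ((Φ * Φᴴ)⁻¹ * E))) ≤ Real.sqrt (1 + θ) * frobNorm E := by
  set V := rowRestrict U (Φᴴ * ((Φ * Φᴴ)⁻¹ * E)) with hV
  have hVs : (rowSupp V).card ≤ k := by
    refine (Finset.card_le_card (rowSupp_subset ?_)).trans hU
    intro i hi
    ext j
    simp [hV, rowRestrict, hi]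
  have hG : ((Φ * Φᴴ)⁻¹)ᴴ = (Φ * Φᴴ)⁻¹ := by
    rw [Matrix.conjTranspose_nonsing_inv, Matrix.conjTranspose_mul,
      Matrix.conjTranspose_conjTranspose]
  have h1 : frobNorm V ^ 2 = ipF E ((Φ * Φᴴ)⁻¹ * Φ * V) := by
    rw [← ipF_self]
    nth_rewrite 1 [hV]
    rw [hV, ← ipF_rowRestrict, ← hV, ipF_mul_left, ipF_mul_left, hG,
      Matrix.conjTranspose_conjTranspose, Matrix.mul_assoc]
  have h2 := ipF_le E ((Φ * Φᴴ)⁻¹ * Φ * V)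
  have h3 : frobNorm ((Φ * Φᴴ)⁻¹ * Φ * V) ≤ Real.sqrt (1 + θ) * frobNorm V := by
    refine le_of_sq_le_sq ?_ (mul_nonneg (Real.sqrt_nonneg _) (frobNorm_nonneg _))
    rw [mul_pow, Real.sq_sqrt (by linarith)]
    exact h V hVs
  have h4 := mul_le_mul_of_nonneg_left h3 (frobNorm_nonneg E)
  rcases (frobNorm_nonneg V).eq_or_lt with h0 | h0
  · rw [← h0]
    exact mul_nonneg (Real.sqrt_nonneg _) (frobNorm_nonneg _)
  · refine le_of_mul_le_mul_right ?_ h0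
    nlinarith

lemma threshold_bound (S T : Finset (Fin N)) (hc : S.card ≤ T.card)
    (X Xt Q : Matrix (Fin N) (Fin L) ℂ) (R : Matrix (Fin L) (Fin L) ℂ)
    (hX : ∀ i ∉ S, X i = 0) (hR : IsUnit R) (hQR : Xt = Q * R)
    (α : ℝ) (hα : 1 ≤ α) (hσ : sigmaMax R ≤ α * sigmaMin R)
    (hT : ∀ i ∈ T, ∀ j ∉ T, vecNorm (Q j) ≤ vecNorm (Q i)) :
    frobNorm (rowRestrict Tᶜ X) ≤ Real.sqrt 2 * α * frobNorm (rowRestrict (S ∪ T) (Xt - X)) := by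
  have hXeq : rowRestrict Tᶜ X = rowRestrict (S \ T) Xt + -rowRestrict (S \ T) (Xt - X) := by
    ext i j
    have := hX i
    simp only [rowRestrict, Finset.mem_compl, Finset.mem_sdiff, Matrix.add_apply,
      Matrix.neg_apply, Matrix.sub_apply]
    by_cases h1 : i ∈ S <;> by_cases h2 : i ∈ T <;> simp_all
  have hYeq : rowRestrict (T \ S) Xt = rowRestrict (T \ S) (Xt - X) := by
    ext i j
    have := hX i
    simp only [rowRestrict, Finset.mem_sdiff, Matrix.sub_apply]
    by_cases h1 : i ∈ S <;> by_cases h2 : i ∈ T <;> simp_all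
  have htop := top_rows hc (fun i => vecNorm (Q i)) (fun i => vecNorm_nonneg _) hT
  have hp : frobNorm (rowRestrict (S \ T) Xt) ≤ α * frobNorm (rowRestrict (T \ S) Xt) := by
    have hf := frobNorm_nonneg (rowRestrict (T \ S) Xt)
    refine le_of_sq_le_sq ?_ (by positivity)
    rw [mul_pow, frobNorm_rowRestrict_sq, frobNorm_rowRestrict_sq, hQR]
    calc ∑ i ∈ S \ T, vecNorm ((Q * R) i) ^ 2
        ≤ ∑ i ∈ S \ T, sigmaMax R ^ 2 * vecNorm (Q i) ^ 2 := by
          refine Finset.sum_le_sum fun i _ => ?_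
          rw [← mul_pow]
          exact pow_le_pow_left₀ (vecNorm_nonneg _) (row_bounds Q R hR i).1 2
      _ = sigmaMax R ^ 2 * ∑ i ∈ S \ T, vecNorm (Q i) ^ 2 := by rw [Finset.mul_sum]
      _ ≤ (α * sigmaMin R) ^ 2 * ∑ i ∈ T \ S, vecNorm (Q i) ^ 2 :=
          mul_le_mul (pow_le_pow_left₀ (sigmaMax_nonneg R) hσ 2) htop
            (Finset.sum_nonneg fun _ _ => sq_nonneg _) (sq_nonneg _)
      _ = α ^ 2 * ∑ i ∈ T \ S, (sigmaMin R * vecNorm (Q i)) ^ 2 := by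
          simp only [mul_pow]
          rw [← Finset.mul_sum]; ring
      _ ≤ α ^ 2 * ∑ i ∈ T \ S, vecNorm ((Q * R) i) ^ 2 := by
          refine mul_le_mul_of_nonneg_left (Finset.sum_le_sum fun i _ => ?_) (sq_nonneg _)
          exact pow_le_pow_left₀ (mul_nonneg (sigmaMin_nonneg R) (vecNorm_nonneg _))
            (row_bounds Q R hR i).2 2
  rw [hYeq] at hp
  have htri := frobNorm_add_le (rowRestrict (S \ T) Xt) (-rowRestrict (S \ T) (Xt - X))
  rw [← hXeq, frobNorm_neg] at htri
  have hsum : frobNorm (rowRestrict (S \ T) (Xt - X)) ^ 2 +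
      frobNorm (rowRestrict (T \ S) (Xt - X)) ^ 2 ≤
      frobNorm (rowRestrict (S ∪ T) (Xt - X)) ^ 2 := by
    rw [frobNorm_rowRestrict_sq, frobNorm_rowRestrict_sq, frobNorm_rowRestrict_sq,
      ← Finset.sum_union disjoint_sdiff_sdiff]
    refine Finset.sum_le_sum_of_subset_of_nonneg ?_ (fun _ _ _ => sq_nonneg _)
    intro i
    simp only [Finset.mem_union, Finset.mem_sdiff]
    tauto
  have hD := frobNorm_nonneg (rowRestrict (S ∪ T) (Xt - X))
  have hr := frobNorm_nonneg (rowRestrict (S \ T) (Xt - X))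
  have hu := frobNorm_nonneg (rowRestrict (T \ S) (Xt - X))
  generalize frobNorm (rowRestrict (S ∪ T) (Xt - X)) = D at *
  generalize frobNorm (rowRestrict (S \ T) (Xt - X)) = r at *
  generalize frobNorm (rowRestrict (T \ S) (Xt - X)) = u at *
  refine (htri.trans (add_le_add_left hp r)).trans ?_
  refine le_of_sq_le_sq ?_ (by positivity)
  rw [mul_pow, mul_pow, Real.sq_sqrt (by norm_num)]
  have h1 : (α * u + r) ^ 2 ≤ (α ^ 2 + 1) * (r ^ 2 + u ^ 2) := by nlinarith [sq_nonneg (α * r - u)]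
  have h2 : (α ^ 2 + 1) * (r ^ 2 + u ^ 2) ≤ (2 * α ^ 2) * D ^ 2 :=
    mul_le_mul (by nlinarith) hsum (by positivity) (by positivity)
  linarith

end main

/-- one-step contraction estimate of the OSNST+HT+f-FB iteration. -/
theorem stmt12 {M N L s s' t : ℕ} (Φ : Matrix (Fin M) (Fin N) ℂ) (hinv : IsUnit (Φ * Φᴴ))
    (X W' : Matrix (Fin N) (Fin L) ℂ) (E : Matrix (Fin M) (Fin L) ℂ)
    (Y : Matrix (Fin M) (Fin L) ℂ) (hY : Y = Φ * X + E)
    (hXs : (rowSupp X).card ≤ s) (hWs : (rowSupp W').card ≤ s')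
    (Xt : Matrix (Fin N) (Fin L) ℂ) (hXt : Xt = W' + Φᴴ * ((Φ * Φᴴ)⁻¹ * (Y - Φ * W')))
    (Q : Matrix (Fin N) (Fin L) ℂ) (R : Matrix (Fin L) (Fin L) ℂ)
    (hQ : Qᴴ * Q = 1) (hR : IsUnit R) (hQR : Xt = Q * R)
    (α : ℝ) (hα : 1 ≤ α) (hσ : sigmaMax R ≤ α * sigmaMin R)
    (T : Finset (Fin N)) (hTcard : T.card = t) (hts : s ≤ t)
    (hT : ∀ i ∈ T, ∀ j ∉ T, vecNorm (Q j) ≤ vecNorm (Q i))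
    (hTinv : IsUnit ((colSub Φ T)ᴴ * colSub Φ T))
    (δ γ θ : ℝ) (hδ0 : 0 ≤ δ) (hδ1 : δ < 1) (hγ : 0 ≤ γ) (hθ : 0 ≤ θ)
    (hRIC : IsRIC L Φ (s + s' + t) δ)
    (hPRIC : IsPRIC L Φ (s + s' + t) γ)
    (hURIC : IsUpperRIC L ((Φ * Φᴴ)⁻¹ * Φ) (s + t) θ) :
    frobNorm (X - feedback Φ T Xt) ≤
      Real.sqrt (2 * α ^ 2 * γ ^ 2 / (1 - δ ^ 2)) * frobNorm (X - W') +
        (Real.sqrt (1 + δ) / (1 - δ) +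
          Real.sqrt (2 * α ^ 2 * (1 + θ)) / Real.sqrt (1 - δ ^ 2)) * frobNorm E := by
  classical
  have hdet := (Matrix.isUnit_iff_isUnit_det _).1 hinv
  set S := rowSupp X with hS
  have hX : ∀ i ∉ S, X i = 0 := fun i hi => eq_zero_of_notMem hi
  have hST : (S ∪ T).card ≤ s + t := (Finset.card_union_le _ _).trans (by omega)
  have hST' : (S ∪ T).card ≤ s + s' + t := hST.trans (by omega)
  have hA : Φ * Xt = Φ * X + E := by
    rw [hXt, Matrix.mul_add, ← Matrix.mul_assoc Φ, ← Matrix.mul_assoc (Φ * Φᴴ),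
      Matrix.mul_nonsing_inv _ hdet, Matrix.one_mul, hY]
    abel
  have h1 := htp Φ hRIC hδ0 hδ1 S T hST' X Xt E hX hA hTinv
  have h2 := threshold_bound S T (by omega) X Xt Q R hX hR hQR α hα hσ hT
  have hZs : (rowSupp (W' - X)).card ≤ s + s' + t := by
    have : rowSupp (W' - X) ⊆ rowSupp X ∪ rowSupp W' := by
      apply rowSupp_subset
      intro i hi
      rw [Finset.mem_union, not_or] at hi
      change W' i - X i = 0
      rw [eq_zero_of_notMem hi.1, eq_zero_of_notMem hi.2, sub_zero]
    have h3 := Finset.card_le_card this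
    have h4 := Finset.card_union_le (rowSupp X) (rowSupp W')
    rw [← hS] at h3 h4
    omega
  have hdiff : Xt - X = ((W' - X) - Φᴴ * ((Φ * Φᴴ)⁻¹ * (Φ * (W' - X)))) +
      Φᴴ * ((Φ * Φᴴ)⁻¹ * E) := by
    rw [hXt, hY]
    simp only [Matrix.mul_sub, Matrix.mul_add]
    abel
  have h5 := pric_bound Φ hinv hγ hPRIC (W' - X) hZs (S ∪ T) hST'
  have h6 := uric_bound Φ hθ hURIC E (S ∪ T) hST
  have h7 : frobNorm (rowRestrict (S ∪ T) (Xt - X)) ≤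
      γ * frobNorm (X - W') + Real.sqrt (1 + θ) * frobNorm E := by
    have hneg : frobNorm (X - W') = frobNorm (W' - X) := by
      rw [← frobNorm_neg, neg_sub]
    rw [hdiff, rowRestrict_add, hneg]
    exact (frobNorm_add_le _ _).trans (add_le_add h5 h6)
  have hα0 : 0 ≤ α := by linarith
  have h8 : frobNorm (rowRestrict Tᶜ X) ≤ Real.sqrt 2 * α *
      (γ * frobNorm (X - W') + Real.sqrt (1 + θ) * frobNorm E) :=
    h2.trans (mul_le_mul_of_nonneg_left h7 (by positivity))
  have h9 := div_le_div_of_nonneg_right h8 (Real.sqrt_nonneg (1 - δ ^ 2))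
  refine h1.trans ((add_le_add_right h9 _).trans (le_of_eq ?_))
  have e1 : Real.sqrt (2 * α ^ 2 * γ ^ 2 / (1 - δ ^ 2)) =
      Real.sqrt 2 * α * γ / Real.sqrt (1 - δ ^ 2) := by
    rw [Real.sqrt_div (by positivity), Real.sqrt_mul (by positivity), Real.sqrt_mul (by positivity),
      Real.sqrt_sq hα0, Real.sqrt_sq hγ]
  have e2 : Real.sqrt (2 * α ^ 2 * (1 + θ)) = Real.sqrt 2 * α * Real.sqrt (1 + θ) := by
    rw [Real.sqrt_mul (by positivity), Real.sqrt_mul (by positivity), Real.sqrt_sq hα0]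
  rw [e1, e2]
  ring
end

section
/- (Noiseless exact recovery.) Under the hypotheses of Theorem 1 with E = 0 (so Y = ΦX), if moreover 2α²γ² + δ² < 1, then ρ = √(2α²γ²/(1 − δ²)) < 1 and the iterates of the OSNST+HT+f-FB algorithm satisfy ‖X − W^k‖_F ≤ ρ^k·‖X‖_F for all k ≥ 1; in particular W^k converges to X as k → ∞. -/
open Matrix BigOperators

namespace S14

noncomputable def ip {m n : Type*} [Fintype m] [Fintype n] (A B : Matrix m n ℂ) : ℝ :=
  (Matrix.trace (Aᴴ * B)).re

section
variable {m n p : Type*} [Fintype m] [Fintype n] [Fintype p]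

lemma ip_add_left (A B C : Matrix m n ℂ) : ip (A + B) C = ip A C + ip B C := by
  simp [ip, Matrix.add_mul]
lemma ip_add_right (A B C : Matrix m n ℂ) : ip A (B + C) = ip A B + ip A C := by
  simp [ip, Matrix.mul_add]
lemma ip_sub_left (A B C : Matrix m n ℂ) : ip (A - B) C = ip A C - ip B C := by
  simp [ip, Matrix.sub_mul]
lemma ip_sub_right (A B C : Matrix m n ℂ) : ip A (B - C) = ip A B - ip A C := by
  simp [ip, Matrix.mul_sub]
lemma ip_smul_right (c : ℝ) (A B : Matrix m n ℂ) : ip A ((c : ℂ) • B) = c * ip A B := by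
  simp [ip]
lemma ip_comm (A B : Matrix m n ℂ) : ip A B = ip B A := by
  unfold ip
  have h : Aᴴ * B = (Bᴴ * A)ᴴ := by simp [Matrix.conjTranspose_mul]
  rw [h, Matrix.trace_conjTranspose]
  simp
lemma ip_smul_left (c : ℝ) (A B : Matrix m n ℂ) : ip ((c : ℂ) • A) B = c * ip A B := by
  rw [ip_comm, ip_smul_right, ip_comm]
lemma ip_zero_right (A : Matrix m n ℂ) : ip A 0 = 0 := by simp [ip]
lemma ip_zero_left (A : Matrix m n ℂ) : ip 0 A = 0 := by simp [ip]
lemma ip_adj (P : Matrix p m ℂ) (A : Matrix m n ℂ) (B : Matrix p n ℂ) :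
    ip (P * A) B = ip A (Pᴴ * B) := by
  simp [ip, Matrix.conjTranspose_mul, Matrix.mul_assoc]
lemma ip_sum (A B : Matrix m n ℂ) :
    ip A B = ∑ i, ∑ j, ((starRingEnd ℂ) (A i j) * B i j).re := by
  unfold ip
  rw [Matrix.trace, Complex.re_sum, Finset.sum_comm]
  refine Finset.sum_congr rfl fun j _ => ?_
  simp [Matrix.diag, Matrix.mul_apply, Complex.re_sum]
lemma ip_self (A : Matrix m n ℂ) : ip A A = frobNorm A ^ 2 := by
  rw [ip_sum, frobNorm, Real.sq_sqrt (by positivity)]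
  refine Finset.sum_congr rfl fun i _ => Finset.sum_congr rfl fun j _ => ?_
  rw [Complex.conj_mul']; norm_cast
lemma ip_self_nonneg (A : Matrix m n ℂ) : 0 ≤ ip A A := by
  rw [ip_self]; positivity
lemma ip_cs (A B : Matrix m n ℂ) : ip A B ^ 2 ≤ ip A A * ip B B := by
  have h : ∀ x : ℝ, 0 ≤ ip B B * (x * x) + (2 * ip A B) * x + ip A A := by
    intro x
    have := ip_self_nonneg (A + (x : ℂ) • B)
    simp only [ip_add_left, ip_add_right, ip_smul_left, ip_smul_right] at this
    rw [ip_comm B A] at this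
    linarith
  have := discrim_le_zero h
  unfold discrim at this
  nlinarith
end

/-- squared row norm -/
noncomputable def rn {N L : ℕ} (Z : Matrix (Fin N) (Fin L) ℂ) (i : Fin N) : ℝ :=
  ∑ j, ‖Z i j‖ ^ 2

lemma rn_nonneg {N L : ℕ} (Z : Matrix (Fin N) (Fin L) ℂ) (i : Fin N) : 0 ≤ rn Z i := by
  unfold rn; positivity

lemma frob_sq {N L : ℕ} (Z : Matrix (Fin N) (Fin L) ℂ) : frobNorm Z ^ 2 = ∑ i, rn Z i := by
  rw [frobNorm, Real.sq_sqrt (by positivity)]; rfl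

lemma vec_sq {n : Type*} [Fintype n] (v : n → ℂ) : vecNorm v ^ 2 = ∑ i, ‖v i‖ ^ 2 := by
  rw [vecNorm, Real.sq_sqrt (by positivity)]

lemma vec_nonneg {n : Type*} [Fintype n] (v : n → ℂ) : 0 ≤ vecNorm v := Real.sqrt_nonneg _

lemma vec_cs {n : Type*} [Fintype n] (v w : n → ℂ) :
    ‖v ⬝ᵥ w‖ ≤ vecNorm v * vecNorm w := by
  calc ‖v ⬝ᵥ w‖ ≤ ∑ i, ‖v i * w i‖ := norm_sum_le _ _
    _ = ∑ i, ‖v i‖ * ‖w i‖ := by simp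
    _ ≤ _ := Real.sum_mul_le_sqrt_mul_sqrt _ _ _

lemma vec_smul {n : Type*} [Fintype n] (c : ℂ) (v : n → ℂ) :
    vecNorm (c • v) = ‖c‖ * vecNorm v := by
  unfold vecNorm
  simp only [Pi.smul_apply, smul_eq_mul, norm_mul, mul_pow]
  rw [← Finset.mul_sum, Real.sqrt_mul (by positivity), Real.sqrt_sq (norm_nonneg _)]

lemma vec_star {n : Type*} [Fintype n] (v : n → ℂ) : vecNorm (star v) = vecNorm v := by
  simp [vecNorm]

lemma vec_zero {n : Type*} [Fintype n] (v : n → ℂ) (h : vecNorm v = 0) : v = 0 := by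
  have h2 := vec_sq v
  rw [h] at h2
  funext i
  rw [zero_pow two_ne_zero] at h2
  have := (Finset.sum_eq_zero_iff_of_nonneg (f := fun i => ‖v i‖ ^ 2)
    (fun i _ => by positivity)).1 h2.symm i (Finset.mem_univ i)
  simpa using this

lemma dot_star {n : Type*} [Fintype n] (v : n → ℂ) : v ⬝ᵥ star v = ((vecNorm v ^ 2 : ℝ) : ℂ) := by
  rw [vec_sq]; simp [dotProduct, Complex.mul_conj']

lemma sigma_bdd {L : ℕ} (R : Matrix (Fin L) (Fin L) ℂ) : BddAbove (sigmaSet R) := by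
  refine ⟨Real.sqrt (∑ i, vecNorm (R i) ^ 2), ?_⟩
  rintro c ⟨v, hv, rfl⟩
  unfold vecNorm
  refine Real.sqrt_le_sqrt (Finset.sum_le_sum fun i _ => ?_)
  have := vec_cs (R i) v
  rw [hv, mul_one] at this
  exact pow_le_pow_left₀ (norm_nonneg _) this 2

lemma sigma_norm {L : ℕ} (R : Matrix (Fin L) (Fin L) ℂ) (v : Fin L → ℂ) (h : vecNorm v ≠ 0) :
    vecNorm (R.mulVec v) / vecNorm v ∈ sigmaSet R := by
  have h0 := vec_nonneg v
  refine ⟨((vecNorm v)⁻¹ : ℂ) • v, ?_, ?_⟩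
  · rw [vec_smul, norm_inv, Complex.norm_real, Real.norm_of_nonneg h0, inv_mul_cancel₀ h]
  · rw [Matrix.mulVec_smul, vec_smul, norm_inv, Complex.norm_real, Real.norm_of_nonneg h0]
    field_simp

lemma sigmaMax_le {L : ℕ} (R : Matrix (Fin L) (Fin L) ℂ) (v : Fin L → ℂ) :
    vecNorm (R.mulVec v) ≤ sigmaMax R * vecNorm v := by
  by_cases h : vecNorm v = 0
  · have := vec_zero v h
    subst this
    simp [vecNorm]
  · have h1 := le_csSup (sigma_bdd R) (sigma_norm R v h)
    have h0 : 0 < vecNorm v := lt_of_le_of_ne (vec_nonneg v) (Ne.symm h)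
    rwa [div_le_iff₀ h0] at h1

lemma sigmaMin_le {L : ℕ} (R : Matrix (Fin L) (Fin L) ℂ) (v : Fin L → ℂ) :
    sigmaMin R * vecNorm v ≤ vecNorm (R.mulVec v) := by
  by_cases h : vecNorm v = 0
  · rw [h, mul_zero]; exact vec_nonneg _
  · have h1 : sigmaMin R ≤ _ := csInf_le ⟨0, by rintro c ⟨v, hv, rfl⟩; exact vec_nonneg _⟩
      (sigma_norm R v h)
    have h0 : 0 < vecNorm v := lt_of_le_of_ne (vec_nonneg v) (Ne.symm h)
    rwa [le_div_iff₀ h0] at h1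

lemma sigmaMax_nonneg {L : ℕ} (R : Matrix (Fin L) (Fin L) ℂ) : 0 ≤ sigmaMax R :=
  Real.sSup_nonneg (by rintro c ⟨v, hv, rfl⟩; exact vec_nonneg _)

lemma sigmaMin_nonneg {L : ℕ} (R : Matrix (Fin L) (Fin L) ℂ) : 0 ≤ sigmaMin R :=
  Real.sInf_nonneg (by rintro c ⟨v, hv, rfl⟩; exact vec_nonneg _)

lemma row_max {L : ℕ} (R : Matrix (Fin L) (Fin L) ℂ) (q : Fin L → ℂ) :
    vecNorm (Matrix.vecMul q R) ≤ sigmaMax R * vecNorm q := by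
  set w := Matrix.vecMul q R with hw
  have h1 : vecNorm w ^ 2 ≤ vecNorm q * vecNorm (R.mulVec (star w)) := by
    have := vec_cs q (R.mulVec (star w))
    rw [Matrix.dotProduct_mulVec, ← hw, dot_star, Complex.norm_real,
      Real.norm_of_nonneg (by positivity)] at this
    exact this
  have h2 := sigmaMax_le R (star w)
  rw [vec_star] at h2
  have hq := vec_nonneg q
  have hw0 := vec_nonneg w
  rcases hw0.eq_or_lt with h | h
  · rw [← h]; exact mul_nonneg (sigmaMax_nonneg R) hq
  · have := mul_le_mul_of_nonneg_left h2 hq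
    nlinarith

lemma row_min {L : ℕ} (R : Matrix (Fin L) (Fin L) ℂ) (hR : IsUnit R) (q : Fin L → ℂ) :
    sigmaMin R * vecNorm q ≤ vecNorm (Matrix.vecMul q R) := by
  have hd := (Matrix.isUnit_iff_isUnit_det R).1 hR
  set z := R⁻¹.mulVec (star q) with hz
  have hRz : R.mulVec z = star q := by
    rw [hz, Matrix.mulVec_mulVec, Matrix.mul_nonsing_inv _ hd, Matrix.one_mulVec]
  have h1 : vecNorm q ^ 2 ≤ vecNorm (Matrix.vecMul q R) * vecNorm z := by
    have := vec_cs (Matrix.vecMul q R) z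
    rw [← Matrix.dotProduct_mulVec, hRz, dot_star, Complex.norm_real,
      Real.norm_of_nonneg (by positivity)] at this
    exact this
  have h2 := sigmaMin_le R z
  rw [hRz, vec_star] at h2
  have hq := vec_nonneg q
  have hw := vec_nonneg (Matrix.vecMul q R)
  have hs := sigmaMin_nonneg R
  rcases hq.eq_or_lt with h | h
  · rw [← h, mul_zero]; exact hw
  · have h3 := mul_le_mul_of_nonneg_left h2 hw
    have h4 := mul_le_mul_of_nonneg_left h1 hs
    nlinarith

/-- rows comparison -/
lemma sum_compare {ι : Type*} [DecidableEq ι] (S T : Finset ι) (g : ι → ℝ) (hg : ∀ i, 0 ≤ g i)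
    (hc : S.card ≤ T.card) (hT : ∀ i ∈ T, ∀ m ∉ T, g m ≤ g i) :
    ∑ i ∈ S \ T, g i ≤ ∑ i ∈ T \ S, g i := by
  have hc2 : (S \ T).card ≤ (T \ S).card := by
    have h1 := Finset.card_sdiff_add_card_inter S T
    have h2 := Finset.card_sdiff_add_card_inter T S
    rw [Finset.inter_comm] at h2
    omega
  rcases (T \ S).eq_empty_or_nonempty with h | h
  · rw [h] at hc2
    have : S \ T = ∅ := by simpa using hc2
    rw [this, h]
  · obtain ⟨a, ha, hmin⟩ := Finset.exists_min_image (T \ S) g h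
    calc ∑ i ∈ S \ T, g i ≤ (S \ T).card • g a :=
          Finset.sum_le_card_nsmul _ _ _ fun i hi =>
            hT a (Finset.mem_sdiff.1 ha).1 i (Finset.mem_sdiff.1 hi).2
      _ ≤ (T \ S).card • g a := nsmul_le_nsmul_left (hg a) hc2
      _ ≤ _ := Finset.card_nsmul_le_sum _ _ _ hmin

lemma rn_eq {N L : ℕ} (Z : Matrix (Fin N) (Fin L) ℂ) (i : Fin N) : rn Z i = vecNorm (Z i) ^ 2 := by
  rw [vec_sq]; rfl

lemma thr {N L : ℕ} (Q : Matrix (Fin N) (Fin L) ℂ) (R : Matrix (Fin L) (Fin L) ℂ) (α : ℝ)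
    (hα : 1 ≤ α) (hR : IsUnit R) (hs : sigmaMax R ≤ α * sigmaMin R) (S T : Finset (Fin N))
    (hc : S.card ≤ T.card) (hT : ∀ i ∈ T, ∀ m ∉ T, vecNorm (Q m) ≤ vecNorm (Q i)) :
    ∑ i ∈ S \ T, rn (Q * R) i ≤ α ^ 2 * ∑ i ∈ T \ S, rn (Q * R) i := by
  have h1 : ∀ i, rn (Q * R) i ≤ sigmaMax R ^ 2 * rn Q i := by
    intro i
    rw [rn_eq, rn_eq, ← mul_pow]
    exact pow_le_pow_left₀ (vec_nonneg _) (row_max R (Q i)) 2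
  have h2 : ∀ i, sigmaMin R ^ 2 * rn Q i ≤ rn (Q * R) i := by
    intro i
    rw [rn_eq, rn_eq, ← mul_pow]
    exact pow_le_pow_left₀ (mul_nonneg (sigmaMin_nonneg _) (vec_nonneg _)) (row_min R hR (Q i)) 2
  have h3 : sigmaMax R ^ 2 ≤ α ^ 2 * sigmaMin R ^ 2 := by
    rw [← mul_pow]; exact pow_le_pow_left₀ (sigmaMax_nonneg _) hs 2
  have h4 := sum_compare S T (rn Q) (rn_nonneg Q) hc (fun i hi m hm => by
    rw [rn_eq, rn_eq]; exact pow_le_pow_left₀ (vec_nonneg _) (hT i hi m hm) 2)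
  calc ∑ i ∈ S \ T, rn (Q * R) i ≤ ∑ i ∈ S \ T, sigmaMax R ^ 2 * rn Q i :=
        Finset.sum_le_sum fun i _ => h1 i
    _ = sigmaMax R ^ 2 * ∑ i ∈ S \ T, rn Q i := by rw [Finset.mul_sum]
    _ ≤ sigmaMax R ^ 2 * ∑ i ∈ T \ S, rn Q i := by gcongr
    _ ≤ (α ^ 2 * sigmaMin R ^ 2) * ∑ i ∈ T \ S, rn Q i := by
        gcongr; exact Finset.sum_nonneg fun i _ => rn_nonneg _ _
    _ = α ^ 2 * ∑ i ∈ T \ S, sigmaMin R ^ 2 * rn Q i := by rw [mul_assoc, Finset.mul_sum]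
    _ ≤ _ := by gcongr with i hi; exact h2 i

lemma rn_add {N L : ℕ} (A B : Matrix (Fin N) (Fin L) ℂ) (t : ℝ) (ht : 0 < t) (i : Fin N) :
    rn (A + B) i ≤ (1 + t) * rn A i + (1 + 1 / t) * rn B i := by
  unfold rn
  rw [Finset.mul_sum, Finset.mul_sum, ← Finset.sum_add_distrib]
  refine Finset.sum_le_sum fun j _ => ?_
  have h1 : ‖(A + B) i j‖ ≤ ‖A i j‖ + ‖B i j‖ := norm_add_le _ _
  have h2 := pow_le_pow_left₀ (norm_nonneg _) h1 2
  refine h2.trans ?_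
  have h3 : 0 ≤ (t * ‖A i j‖ - ‖B i j‖) ^ 2 / t := by positivity
  have h4 : (t * ‖A i j‖ - ‖B i j‖) ^ 2 / t
    = t * ‖A i j‖ ^ 2 - 2 * ‖A i j‖ * ‖B i j‖ + 1 / t * ‖B i j‖ ^ 2 := by field_simp; ring
  nlinarith

/-- projection step -/
lemma proj {M N L t : ℕ} (Φ : Matrix (Fin M) (Fin N) ℂ) (hinv : IsUnit (Φ * Φᴴ)) (γ : ℝ)
    (hγ : 0 ≤ γ) (h : IsPRIC L Φ t γ) (Z e D : Matrix (Fin N) (Fin L) ℂ)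
    (hZ : (rowSupp Z).card ≤ t) (he : (rowSupp e).card ≤ t)
    (hD : D = e - Φᴴ * ((Φ * Φᴴ)⁻¹ * (Φ * e))) :
    ip Z D ^ 2 ≤ γ ^ 2 * ip Z Z * ip e e := by
  have hd := (Matrix.isUnit_iff_isUnit_det _).1 hinv
  let p : Matrix (Fin N) (Fin L) ℂ → Matrix (Fin N) (Fin L) ℂ :=
    fun e => e - Φᴴ * ((Φ * Φᴴ)⁻¹ * (Φ * e))
  have hp0 : ∀ e, Φ * p e = 0 := by
    intro e
    simp only [p]
    rw [Matrix.mul_sub, ← Matrix.mul_assoc Φ Φᴴ, ← Matrix.mul_assoc (Φ * Φᴴ),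
      Matrix.mul_nonsing_inv _ hd, Matrix.one_mul, sub_self]
  have hp1 : ∀ a b, ip (p a) (p b) = ip (p a) b := by
    intro a b
    have : ip (p a) (p b) = ip (p a) (b - Φᴴ * ((Φ * Φᴴ)⁻¹ * (Φ * b))) := rfl
    rw [this, ip_sub_right, ← ip_adj, hp0, ip_zero_left, sub_zero]
  have hp2 : ∀ a b, ip (p a) (p b) = ip a (p b) := by
    intro a b
    rw [ip_comm, hp1, ip_comm]
  have hp3 : ∀ a : Matrix (Fin N) (Fin L) ℂ, (rowSupp a).card ≤ t →
      ip (p a) (p a) ≤ γ * ip a a := by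
    intro a ha
    have h1 := h a ha
    have : ip a (p a) = ip a (a - Φᴴ * ((Φ * Φᴴ)⁻¹ * (Φ * a))) := rfl
    rw [hp2, this, ip_sub_right, ← ip_adj]
    rw [← ip_self] at h1
    change _ ≤ ip (Φ * a) ((Φ * Φᴴ)⁻¹ * (Φ * a)) at h1
    linarith
  have hD' : D = p e := hD
  rw [hD', ← hp2]
  calc _ ≤ _ := ip_cs _ _
    _ ≤ (γ * ip Z Z) * (γ * ip e e) :=
      mul_le_mul (hp3 Z hZ) (hp3 e he) (ip_self_nonneg _) (mul_nonneg hγ (ip_self_nonneg _))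
    _ = _ := by ring

lemma supp_sub {N L : ℕ} (Z : Matrix (Fin N) (Fin L) ℂ) (U : Finset (Fin N))
    (h : ∀ i ∉ U, Z i = 0) : rowSupp Z ⊆ U := by
  intro i hi
  by_contra hU
  simp [rowSupp] at hi
  exact hi (h i hU)

lemma supp_zero {N L : ℕ} (Z : Matrix (Fin N) (Fin L) ℂ) (i : Fin N) (h : i ∉ rowSupp Z) :
    Z i = 0 := by
  simpa [rowSupp] using h

lemma ip_restrict {N L : ℕ} (T : Finset (Fin N)) (Z : Matrix (Fin N) (Fin L) ℂ) :
    ip (rowRestrict T Z) Z = ∑ i ∈ T, rn Z i := by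
  rw [ip_sum, ← Finset.sum_subset (Finset.subset_univ T)]
  · refine Finset.sum_congr rfl fun i hi => Finset.sum_congr rfl fun j _ => ?_
    simp only [rowRestrict, hi, if_true]
    rw [Complex.conj_mul']; norm_cast
  · intro i _ hi
    simp [rowRestrict, hi]

lemma ip_restrict2 {N L : ℕ} (T : Finset (Fin N)) (Z : Matrix (Fin N) (Fin L) ℂ) :
    ip (rowRestrict T Z) (rowRestrict T Z) = ∑ i ∈ T, rn Z i := by
  rw [← ip_restrict, ip_sum, ip_sum]
  refine Finset.sum_congr rfl fun i _ => Finset.sum_congr rfl fun j _ => ?_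
  by_cases hi : i ∈ T <;> simp [rowRestrict, hi]

lemma proj2 {M N L t : ℕ} (Φ : Matrix (Fin M) (Fin N) ℂ) (hinv : IsUnit (Φ * Φᴴ)) (γ : ℝ)
    (hγ : 0 ≤ γ) (h : IsPRIC L Φ t γ) (e D : Matrix (Fin N) (Fin L) ℂ)
    (U : Finset (Fin N)) (hU : U.card ≤ t) (he : (rowSupp e).card ≤ t)
    (hD : D = e - Φᴴ * ((Φ * Φᴴ)⁻¹ * (Φ * e))) :
    ∑ i ∈ U, rn D i ≤ γ ^ 2 * ip e e := by
  have h1 := proj Φ hinv γ hγ h (rowRestrict U D) e D ((Finset.card_le_card (supp_sub _ U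
    (fun i hi => by funext j; simp [rowRestrict, hi]))).trans hU) he hD
  rw [ip_restrict, ip_restrict2] at h1
  have h0 : 0 ≤ ∑ i ∈ U, rn D i := Finset.sum_nonneg fun i _ => rn_nonneg _ _
  rcases h0.eq_or_lt with h | h
  · rw [← h]; exact mul_nonneg (sq_nonneg _) (ip_self_nonneg _)
  · nlinarith

lemma mul_split {M N L : ℕ} (Φ : Matrix (Fin M) (Fin N) ℂ) (T : Finset (Fin N))
    (Z : Matrix (Fin N) (Fin L) ℂ) :
    Φ * Z = colSub Φ T * rowSub T Z + colSub Φ Tᶜ * rowSub Tᶜ Z := by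
  ext i j
  simp only [Matrix.add_apply, Matrix.mul_apply, colSub, rowSub]
  rw [Finset.sum_coe_sort T (fun x => Φ i x * Z x j),
    Finset.sum_coe_sort Tᶜ (fun x => Φ i x * Z x j), Finset.sum_add_sum_compl]

lemma mul_split' {M N L : ℕ} (Φ : Matrix (Fin M) (Fin N) ℂ) (T : Finset (Fin N))
    (Z : Matrix (Fin N) (Fin L) ℂ) (h : ∀ i ∉ T, Z i = 0) :
    Φ * Z = colSub Φ T * rowSub T Z := by
  rw [mul_split Φ T Z]
  have : rowSub Tᶜ Z = 0 := by
    ext i j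
    have := h i.1 (Finset.mem_compl.1 i.2)
    simp [rowSub, this]
  rw [this, Matrix.mul_zero, add_zero]

lemma fb_orth {M N L : ℕ} (Φ : Matrix (Fin M) (Fin N) ℂ) (T : Finset (Fin N))
    (Z : Matrix (Fin N) (Fin L) ℂ) (hT : IsUnit ((colSub Φ T)ᴴ * colSub Φ T)) :
    (colSub Φ T)ᴴ * (Φ * feedback Φ T Z) = (colSub Φ T)ᴴ * (Φ * Z) := by
  have hd := (Matrix.isUnit_iff_isUnit_det _).1 hT
  rw [mul_split' Φ T (feedback Φ T Z) (fun i hi => by funext j; simp [feedback, hi]),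
    mul_split Φ T Z]
  have : rowSub T (feedback Φ T Z) = rowSub T Z +
        ((colSub Φ T)ᴴ * colSub Φ T)⁻¹ * (colSub Φ T)ᴴ *
          (colSub Φ Tᶜ * rowSub Tᶜ Z) := by
    ext i j
    simp [rowSub, feedback]
  rw [this, Matrix.mul_add, Matrix.mul_add, Matrix.mul_add]
  congr 1
  rw [← Matrix.mul_assoc, Matrix.mul_assoc _ (colSub Φ T)ᴴ, ← Matrix.mul_assoc _ _⁻¹,
    Matrix.mul_nonsing_inv _ hd, Matrix.one_mul]

/-- least squares step -/
lemma ls {M N L t : ℕ} (Φ : Matrix (Fin M) (Fin N) ℂ) (δ : ℝ) (hδ : 0 ≤ δ)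
    (h : IsRIC L Φ t δ) (T : Finset (Fin N)) (v : Matrix (Fin N) (Fin L) ℂ)
    (hv : (rowSupp v).card ≤ t) (ho : (colSub Φ T)ᴴ * (Φ * v) = 0) :
    (1 - δ ^ 2) * frobNorm v ^ 2 ≤ ∑ i ∈ Tᶜ, rn v i := by
  set u := rowRestrict T v with hu
  have huv : ip v u = ∑ i ∈ T, rn v i := by rw [ip_comm, ip_restrict]
  have huu : ip u u = ∑ i ∈ T, rn v i := ip_restrict2 T v
  have hPhi : ip (Φ * v) (Φ * u) = 0 := by
    rw [mul_split' Φ T u (fun i hi => by funext j; simp [hu, rowRestrict, hi]), ip_comm, ip_adj,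
      ho, ip_zero_right]
  set b := ∑ i ∈ T, rn v i with hb
  have hb0 : 0 ≤ b := Finset.sum_nonneg fun i _ => rn_nonneg _ _
  set a := ip v v with ha
  have ha0 : 0 ≤ a := ip_self_nonneg v
  have hs : ∀ x : ℝ, (rowSupp (v + (x : ℂ) • u)).card ≤ t := by
    intro x
    refine (Finset.card_le_card (supp_sub _ (rowSupp v) fun i hi => ?_)).trans hv
    have := supp_zero v i hi
    funext j
    simp [hu, rowRestrict, this]
  have key : ∀ x : ℝ, 0 ≤ (δ * b) * (x * x) + (-(2 * b)) * x + δ * a := by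
    intro x
    have h1 := (h _ (hs x)).1
    have h2 := (h _ (hs (-x))).2
    simp only [← ip_self, Matrix.mul_add, Matrix.mul_smul] at h1 h2
    simp only [ip_add_left, ip_add_right, ip_smul_left, ip_smul_right] at h1 h2
    rw [ip_comm (Φ * u) (Φ * v), ip_comm u v, hPhi, huv, huu, ← ha] at h1 h2
    linarith
  have hdis := discrim_le_zero key
  unfold discrim at hdis
  have hba : b ≤ δ ^ 2 * a := by
    rcases hb0.eq_or_lt with hb' | hb'
    · rw [← hb']; positivity
    · by_contra hcon
      push Not at hcon
      nlinarith
  have htot : frobNorm v ^ 2 = b + ∑ i ∈ Tᶜ, rn v i := by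
    rw [frob_sq, hb, Finset.sum_add_sum_compl]
  have : a = frobNorm v ^ 2 := ip_self v
  rw [← this] at htot ⊢
  linarith

lemma step {M N L s f1 f0 : ℕ} (Φ : Matrix (Fin M) (Fin N) ℂ) (hinv : IsUnit (Φ * Φᴴ))
    (X : Matrix (Fin N) (Fin L) ℂ) (hXs : (rowSupp X).card ≤ s) (hf : s ≤ f1)
    (δ γ α : ℝ) (hδ0 : 0 ≤ δ) (hγ : 0 ≤ γ) (hα : 1 ≤ α)
    (hRIC : IsRIC L Φ (s + f1 + f0) δ) (hPRIC : IsPRIC L Φ (s + f1 + f0) γ)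
    (W0 Xj Q : Matrix (Fin N) (Fin L) ℂ) (R : Matrix (Fin L) (Fin L) ℂ) (T : Finset (Fin N))
    (hW0 : (rowSupp W0).card ≤ f0)
    (hX : Xj = W0 + Φᴴ * ((Φ * Φᴴ)⁻¹ * (Φ * X - Φ * W0)))
    (hR : IsUnit R) (hQR : Xj = Q * R) (hsig : sigmaMax R ≤ α * sigmaMin R)
    (hTc : T.card = f1) (hT : ∀ i ∈ T, ∀ m ∉ T, vecNorm (Q m) ≤ vecNorm (Q i))
    (hTinv : IsUnit ((colSub Φ T)ᴴ * colSub Φ T)) :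
    (1 - δ ^ 2) * frobNorm (X - feedback Φ T Xj) ^ 2
      ≤ 2 * α ^ 2 * γ ^ 2 * frobNorm (X - W0) ^ 2 := by
  have hd := (Matrix.isUnit_iff_isUnit_det _).1 hinv
  set S := rowSupp X with hS
  have hD : X - Xj = (X - W0) - Φᴴ * ((Φ * Φᴴ)⁻¹ * (Φ * (X - W0))) := by
    rw [hX, Matrix.mul_sub Φ]; abel
  have hΦ : Φ * Xj = Φ * X := by
    rw [hX, Matrix.mul_add, ← Matrix.mul_assoc Φ Φᴴ, ← Matrix.mul_assoc (Φ * Φᴴ),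
      Matrix.mul_nonsing_inv _ hd, Matrix.one_mul]; abel
  have hsupv : ∀ i ∉ S ∪ T, (X - feedback Φ T Xj) i = 0 := by
    intro i hi
    simp only [Finset.mem_union, not_or] at hi
    have h1 := supp_zero X i hi.1
    funext j
    simp [h1, feedback, hi.2]
  have hST : (S ∪ T).card ≤ s + f1 := by
    have := Finset.card_union_le S T
    omega
  have h1 := ls Φ δ hδ0 hRIC T (X - feedback Φ T Xj)
    (((Finset.card_le_card (supp_sub _ _ hsupv)).trans hST).trans (by omega))
    (by rw [Matrix.mul_sub, Matrix.mul_sub, fb_orth Φ T Xj hTinv, hΦ, sub_self])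
  refine h1.trans ?_
  have h2 : ∑ i ∈ Tᶜ, rn (X - feedback Φ T Xj) i = ∑ i ∈ S \ T, rn X i := by
    have h3 : ∑ i ∈ Tᶜ, rn (X - feedback Φ T Xj) i = ∑ i ∈ Tᶜ, rn X i := by
      refine Finset.sum_congr rfl fun i hi => ?_
      have hi := Finset.mem_compl.1 hi
      simp [rn, feedback, hi]
    rw [h3]
    symm
    apply Finset.sum_subset
    · intro i hi
      exact Finset.mem_compl.2 (Finset.mem_sdiff.1 hi).2
    · intro i hi hi2
      have hi3 : i ∉ S := fun hS => hi2 (Finset.mem_sdiff.2 ⟨hS, Finset.mem_compl.1 hi⟩)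
      have := supp_zero X i hi3
      simp [rn, this]
  rw [h2]
  have hth := thr Q R α hα hR hsig S T (by omega) hT
  rw [← hQR] at hth
  have hTS : ∑ i ∈ T \ S, rn Xj i = ∑ i ∈ T \ S, rn (X - Xj) i := by
    refine Finset.sum_congr rfl fun i hi => ?_
    have := supp_zero X i (Finset.mem_sdiff.1 hi).2
    simp [rn, this]
  rw [hTS] at hth
  have hW : (rowSupp (X - W0)).card ≤ s + f1 + f0 := by
    have hsub : rowSupp (X - W0) ⊆ S ∪ rowSupp W0 := by
      apply supp_sub
      intro i hi
      simp only [Finset.mem_union, not_or] at hi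
      have h1 := supp_zero X i hi.1
      have h2 := supp_zero W0 i hi.2
      funext j
      simp [h1, h2]
    have h3 := Finset.card_le_card hsub
    have h4 := Finset.card_union_le S (rowSupp W0)
    omega
  have hp := proj2 Φ hinv γ hγ hPRIC (X - W0) (X - Xj) (S ∪ T) (by omega) hW hD
  rw [ip_self] at hp
  have hα2 : (0:ℝ) < α ^ 2 := by positivity
  have h5 : ∑ i ∈ S \ T, rn X i ≤
      (1 + α ^ 2) * ∑ i ∈ S \ T, rn (X - Xj) i + (1 + 1 / α ^ 2) * ∑ i ∈ S \ T, rn Xj i := by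
    rw [Finset.mul_sum, Finset.mul_sum, ← Finset.sum_add_distrib]
    refine Finset.sum_le_sum fun i _ => ?_
    have := rn_add (X - Xj) Xj (α ^ 2) hα2 i
    rwa [sub_add_cancel] at this
  have h6 : ∑ i ∈ S \ T, rn (X - Xj) i + ∑ i ∈ T \ S, rn (X - Xj) i
      ≤ ∑ i ∈ S ∪ T, rn (X - Xj) i := by
    rw [← Finset.sum_union (by
      rw [Finset.disjoint_left]; intro i hi hi2
      exact (Finset.mem_sdiff.1 hi).2 (Finset.mem_sdiff.1 hi2).1)]
    apply Finset.sum_le_sum_of_subset_of_nonneg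
    · intro i hi; simp at hi ⊢; tauto
    · intro i _ _; exact rn_nonneg _ _
  have h7 : (1 + 1 / α ^ 2) * ∑ i ∈ S \ T, rn Xj i
      ≤ (1 + α ^ 2) * ∑ i ∈ T \ S, rn (X - Xj) i := by
    calc _ ≤ (1 + 1 / α ^ 2) * (α ^ 2 * ∑ i ∈ T \ S, rn (X - Xj) i) := by gcongr
      _ = _ := by field_simp; ring
  have h8 : 0 ≤ γ ^ 2 * frobNorm (X - W0) ^ 2 := by positivity
  have h9 : ∑ i ∈ S \ T, rn X i ≤ (1 + α ^ 2) * (γ ^ 2 * frobNorm (X - W0) ^ 2) := by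
    calc _ ≤ (1 + α ^ 2) * (∑ i ∈ S \ T, rn (X - Xj) i + ∑ i ∈ T \ S, rn (X - Xj) i) := by
          linarith
      _ ≤ _ := by gcongr; exact h6.trans hp
  have h10 : 1 ≤ α ^ 2 := one_le_pow₀ hα
  nlinarith

end S14

/-- noiseless exact recovery of the OSNST+HT+f-FB algorithm. -/
theorem stmt14 {M N L s : ℕ} (Φ : Matrix (Fin M) (Fin N) ℂ) (hinv : IsUnit (Φ * Φᴴ))
    (X : Matrix (Fin N) (Fin L) ℂ)
    (Y : Matrix (Fin M) (Fin L) ℂ) (hY : Y = Φ * X)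
    (hXs : (rowSupp X).card ≤ s)
    (f : ℕ → ℕ) (hfmono : Monotone f) (hfs : ∀ j, 1 ≤ j → s ≤ f j) (hf0 : f 0 = 0)
    (δ γ θ α : ℝ) (hδ0 : 0 ≤ δ) (hδ1 : δ < 1) (hγ : 0 ≤ γ) (hθ : 0 ≤ θ) (hα : 1 ≤ α)
    (hRIC : ∀ j, 1 ≤ j → IsRIC L Φ (s + f j + f (j - 1)) δ)
    (hPRIC : ∀ j, 1 ≤ j → IsPRIC L Φ (s + f j + f (j - 1)) γ)
    (hURIC : ∀ j, 1 ≤ j → IsUpperRIC L ((Φ * Φᴴ)⁻¹ * Φ) (s + f j) θ)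
    (W Xs Q : ℕ → Matrix (Fin N) (Fin L) ℂ) (Rm : ℕ → Matrix (Fin L) (Fin L) ℂ)
    (T : ℕ → Finset (Fin N))
    (hW0 : W 0 = 0)
    (hNST : ∀ j, 1 ≤ j →
      Xs j = W (j - 1) + Φᴴ * ((Φ * Φᴴ)⁻¹ * (Y - Φ * W (j - 1))))
    (hQR : ∀ j, 1 ≤ j →
      (Q j)ᴴ * Q j = 1 ∧ IsUnit (Rm j) ∧ Xs j = Q j * Rm j ∧
        sigmaMax (Rm j) ≤ α * sigmaMin (Rm j))
    (hTsel : ∀ j, 1 ≤ j →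
      (T j).card = f j ∧ ∀ i ∈ T j, ∀ m ∉ T j, vecNorm (Q j m) ≤ vecNorm (Q j i))
    (hTinv : ∀ j, 1 ≤ j → IsUnit ((colSub Φ (T j))ᴴ * colSub Φ (T j)))
    (hFB : ∀ j, 1 ≤ j → W j = feedback Φ (T j) (Xs j))
    (hsmall : 2 * α ^ 2 * γ ^ 2 + δ ^ 2 < 1) :
    Real.sqrt (2 * α ^ 2 * γ ^ 2 / (1 - δ ^ 2)) < 1 ∧
      (∀ k, 1 ≤ k →
        frobNorm (X - W k) ≤ Real.sqrt (2 * α ^ 2 * γ ^ 2 / (1 - δ ^ 2)) ^ k * frobNorm X) ∧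
      Filter.Tendsto W Filter.atTop (nhds X) := by
  have hden : 0 < 1 - δ ^ 2 := by nlinarith
  set ρ := Real.sqrt (2 * α ^ 2 * γ ^ 2 / (1 - δ ^ 2)) with hρ
  have hρ1 : ρ < 1 := by
    rw [hρ, Real.sqrt_lt' one_pos, one_pow, div_lt_one hden]
    linarith
  have hρ0 : 0 ≤ ρ := Real.sqrt_nonneg _
  have hρ2 : ρ ^ 2 = 2 * α ^ 2 * γ ^ 2 / (1 - δ ^ 2) := Real.sq_sqrt (by positivity)
  have hsupp : ∀ j, (rowSupp (W j)).card ≤ f j := by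
    intro j
    rcases Nat.eq_zero_or_pos j with h | h
    · subst h
      rw [hW0, hf0]
      have := S14.supp_sub (0 : Matrix (Fin N) (Fin L) ℂ) ∅ (fun i _ => rfl)
      simpa using Finset.card_le_card this
    · rw [hFB j h, ← (hTsel j h).1]
      exact Finset.card_le_card (S14.supp_sub _ _ fun i hi => by
        funext l; simp [feedback, hi])
  have hstep : ∀ j, 1 ≤ j → frobNorm (X - W j) ≤ ρ * frobNorm (X - W (j - 1)) := by
    intro j hj
    obtain ⟨_, hR, hQ, hsig⟩ := hQR j hj
    have hX := hNST j hj
    rw [hY] at hX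
    have h := S14.step Φ hinv X hXs (hfs j hj) δ γ α hδ0 hγ hα (hRIC j hj) (hPRIC j hj)
      (W (j - 1)) (Xs j) (Q j) (Rm j) (T j) (hsupp _) hX hR hQ hsig (hTsel j hj).1
      (hTsel j hj).2 (hTinv j hj)
    rw [← hFB j hj] at h
    refine (fun h h0 => (pow_le_pow_iff_left₀ (Real.sqrt_nonneg _) h0 two_ne_zero).1 h) ?_ (mul_nonneg hρ0 (Real.sqrt_nonneg _))
    rw [mul_pow, hρ2, div_mul_eq_mul_div, le_div_iff₀ hden]
    change frobNorm (X - W j) ^ 2 * (1 - δ ^ 2) ≤ _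
    linarith
  have hall : ∀ k, frobNorm (X - W k) ≤ ρ ^ k * frobNorm X := by
    intro k
    induction k with
    | zero => simp [hW0]
    | succ k ih =>
      refine (hstep (k + 1) (by omega)).trans ?_
      rw [pow_succ', mul_assoc]
      exact mul_le_mul_of_nonneg_left ih hρ0
  refine ⟨hρ1, fun k _ => hall k, ?_⟩
  have hlim : Filter.Tendsto (fun k => ρ ^ k * frobNorm X) Filter.atTop (nhds 0) := by
    simpa using (tendsto_pow_atTop_nhds_zero_of_lt_one hρ0 hρ1).mul_const (frobNorm X)
  refine tendsto_pi_nhds.2 fun i => tendsto_pi_nhds.2 fun l => ?_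
  rw [tendsto_iff_norm_sub_tendsto_zero]
  refine squeeze_zero (fun k => norm_nonneg _) (fun k => ?_) hlim
  refine le_trans ?_ (hall k)
  rw [norm_sub_rev]
  refine Real.le_sqrt_of_sq_le ?_
  calc ‖X i l - W k i l‖ ^ 2 ≤ ∑ j, ‖(X - W k) i j‖ ^ 2 :=
        Finset.single_le_sum (f := fun j => ‖(X - W k) i j‖ ^ 2) (fun _ _ => by positivity)
          (Finset.mem_univ l)
    _ ≤ _ := Finset.single_le_sum (f := fun i => ∑ j, ‖(X - W k) i j‖ ^ 2)
          (fun _ _ => by positivity) (Finset.mem_univ i)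
end
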